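/- Let A be a set of vertices of T with r ∉ A such that no vertex of A lies on the path from r to another vertex of A, and let μ be the hardcore distribution on independent sets of T (μ(S) proportional to λ^{|S|} over independent sets S of T). Then |Pr_μ[r ∈ S | A ⊆ S] − Pr_μ[r ∈ S | A ∩ S = ∅]| ≤ 2·∑_{v ∈ A} ℐ_r^v, where ℐ_r^v = sup_{p : L_r(ℓ(v))∖{v} → [0,1]} |Pr_{ν_p^{v,in}}[r ∈ S] − Pr_{ν_p^{v,out}}[r ∈ S]|. (Both conditioning events on the left have positive probability, since the hypothesis on A forces A to be an independent set of T.) -/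

import Mathlib

open scoped Classical
open Finset

noncomputable section

namespace PaperStmt

variable {V : Type*} [Fintype V]

/-- The set of vertices at distance exactly `ℓ` from the root `r`. -/
def levelSet (G : SimpleGraph V) (r : V) (ℓ : ℕ) : Finset V :=
  Finset.univ.filter fun v => G.dist r v = ℓ

/-- `S` is an independent set of `G`. -/
def IsIndepSet (G : SimpleGraph V) (S : Finset V) : Prop :=
  ∀ i ∈ S, ∀ j ∈ S, ¬ G.Adj i j

/-- Weight of `S` in the level-`ℓ` pinned hardcore measure on the truncation
`T^{≤ℓ}`: the vertices in `P` (a subset of level `ℓ`) have their marginals pinned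
by `p`, vertices strictly inside the ball contribute a factor `λ`. -/
def pinWeight (G : SimpleGraph V) (r : V) (lam : ℝ) (ℓ : ℕ) (P : Finset V)
    (p : V → ℝ) (S : Finset V) : ℝ :=
  if IsIndepSet G S ∧ ∀ v ∈ S, G.dist r v ≤ ℓ then
    lam ^ (S.filter fun v => G.dist r v < ℓ).card
      * (∏ u ∈ P ∩ S, p u) * (∏ u ∈ P \ S, (1 - p u))
  else 0

/-- Probability that `x ∈ S` under the distribution proportional to the weight `w`. -/
def prMem (w : Finset V → ℝ) (x : V) : ℝ :=
  (∑ S : Finset V, if x ∈ S then w S else 0) / (∑ S : Finset V, w S)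

/-- The ratio `R = Pr[x ∈ S] / (1 - Pr[x ∈ S])` for the distribution proportional
to the weight `w`. -/
def ratio (w : Finset V → ℝ) (x : V) : ℝ := prMem w x / (1 - prMem w x)

/-- Weight realizing `ν_p^{v,in}`: the level-`ℓ(v)` pinned measure with `v`
conditioned to be in `S` and the other level-`ℓ(v)` vertices pinned by `p`. -/
def wIn (G : SimpleGraph V) (r : V) (lam : ℝ) (v : V) (p : V → ℝ) :
    Finset V → ℝ :=
  fun S => if v ∈ S then
    pinWeight G r lam (G.dist r v) ((levelSet G r (G.dist r v)).erase v) p S else 0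

/-- Weight realizing `ν_p^{v,out}`. -/
def wOut (G : SimpleGraph V) (r : V) (lam : ℝ) (v : V) (p : V → ℝ) :
    Finset V → ℝ :=
  fun S => if v ∉ S then
    pinWeight G r lam (G.dist r v) ((levelSet G r (G.dist r v)).erase v) p S else 0

/-- The `R`-pseudoinfluence `ℛ_r^v` of `v` on the root `r`. -/
def Rpseudo (G : SimpleGraph V) (r : V) (lam : ℝ) (v : V) : ℝ :=
  sSup {x : ℝ | ∃ p : V → ℝ, (∀ u, 0 ≤ p u ∧ p u ≤ 1) ∧
    x = |ratio (wIn G r lam v p) r - ratio (wOut G r lam v p) r|}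

/-- The pseudoinfluence `ℐ_r^v` of `v` on the root `r` (probability version). -/
def Ipseudo (G : SimpleGraph V) (r : V) (lam : ℝ) (v : V) : ℝ :=
  sSup {x : ℝ | ∃ p : V → ℝ, (∀ u, 0 ≤ p u ∧ p u ≤ 1) ∧
    x = |prMem (wIn G r lam v p) r - prMem (wOut G r lam v p) r|}

/-- The vertex set of the subtree `T_u`: vertices `w` such that `u` lies on the
path from `r` to `w`. -/
def subtreeSet (G : SimpleGraph V) (r u : V) : Set V :=
  {w | G.dist r w = G.dist r u + G.dist u w}

/-- The subtree `T_u` as an induced subgraph. -/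
def subtree (G : SimpleGraph V) (r u : V) : SimpleGraph (subtreeSet G r u) :=
  G.induce (subtreeSet G r u)

/-- `λ` is up-to-`Δ` unique with gap `δ`. -/
def UpToUnique (Δ : ℕ) (lam δ : ℝ) : Prop :=
  ∀ d : ℕ, 1 ≤ d → d ≤ Δ - 1 → ∀ R : ℝ, 0 < R → lam = R * (1 + R) ^ d →
    (d : ℝ) * R / (1 + R) ≤ 1 - δ

/-- Hardcore weight `λ^|S|` on independent sets of `G`. -/
def hcWeight (G : SimpleGraph V) (lam : ℝ) (S : Finset V) : ℝ :=
  if IsIndepSet G S then lam ^ S.card else 0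

set_option linter.unusedSectionVars false

/-- In a tree, every vertex other than the root has a neighbour one level closer to the root. -/
lemma exists_parent {G : SimpleGraph V} (hG : G.IsTree) {r x : V} (hx : 0 < G.dist r x) :
    ∃ y, G.Adj x y ∧ G.dist r x = G.dist r y + 1 := by
  obtain ⟨p, hp⟩ := hG.connected.exists_walk_length_eq_dist r x
  have hnil : ¬ p.Nil := by
    rw [← SimpleGraph.Walk.length_eq_zero_iff]
    omega
  refine ⟨p.penultimate, (p.adj_penultimate hnil).symm, ?_⟩
  have hle := SimpleGraph.dist_le p.dropLast
  have hlen := SimpleGraph.Walk.length_dropLast_add_one hnil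
  have hadj := hG.dist_eq_dist_add_one_of_adj r (p.adj_penultimate hnil)
  omega

/-- In a tree, the neighbour one level closer to the root is unique. -/
lemma parent_unique {G : SimpleGraph V} (hG : G.IsTree) {r x y z : V}
    (hxy : G.Adj x y) (hy : G.dist r x = G.dist r y + 1)
    (hxz : G.Adj x z) (hz : G.dist r x = G.dist r z + 1) : z = y := by
  obtain ⟨p, hp⟩ := hG.connected.exists_walk_length_eq_dist r y
  obtain ⟨q, hq⟩ := hG.connected.exists_walk_length_eq_dist r z
  have hp' : (p.concat hxy.symm).IsPath :=
    SimpleGraph.Walk.isPath_of_length_eq_dist _ (by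
      rw [SimpleGraph.Walk.length_concat, hp, hy])
  have hq' : (q.concat hxz.symm).IsPath :=
    SimpleGraph.Walk.isPath_of_length_eq_dist _ (by
      rw [SimpleGraph.Walk.length_concat, hq, hz])
  have heq := (hG.existsUnique_path r x).unique hp' hq'
  have hpen := congrArg SimpleGraph.Walk.penultimate heq
  simpa using hpen.symm

/-- Hardcore weight on `X` with vertex activities `a` (occupied) and `b` (unoccupied). -/
def activityWeight (G : SimpleGraph V) (X : Finset V) (a b : V → ℝ) (S : Finset V) : ℝ :=
  if IsIndepSet G S then ∏ x ∈ X, (if x ∈ S then a x else b x) else 0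

lemma isIndepSet_insert {G : SimpleGraph V} {x y : V} {X S : Finset V}
    (hxy : G.Adj x y) (huniq : ∀ z ∈ X, G.Adj x z → z = y) (hS : S ⊆ X) :
    IsIndepSet G (insert x S) ↔ IsIndepSet G S ∧ y ∉ S := by
  constructor
  · intro h
    refine ⟨fun i hi j hj => h i (mem_insert_of_mem hi) j (mem_insert_of_mem hj), fun hyS => ?_⟩
    exact h x (mem_insert_self _ _) y (mem_insert_of_mem hyS) hxy
  · rintro ⟨h, hyS⟩ i hi j hj hij
    rcases mem_insert.1 hi with hix | hiS <;> rcases mem_insert.1 hj with hjx | hjS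
    · exact G.irrefl (hix ▸ hjx ▸ hij)
    · exact hyS (huniq j (hS hjS) (hix ▸ hij) ▸ hjS)
    · exact hyS (huniq i (hS hiS) (hjx ▸ hij.symm) ▸ hiS)
    · exact h i hiS j hjS hij

/-- Summing out a vertex with a single neighbour `y` in `X` amounts to changing the activities
at `y`. -/
lemma sum_activityWeight_insert {G : SimpleGraph V} {x y : V} {X : Finset V} (hx : x ∉ X)
    (hy : y ∈ X) (hxy : G.Adj x y) (huniq : ∀ z ∈ X, G.Adj x z → z = y) (a b : V → ℝ)
    (F : Finset V → ℝ) (hF : ∀ S, F (insert x S) = F S) :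
    ∑ S ∈ (insert x X).powerset, F S * activityWeight G (insert x X) a b S =
      ∑ S ∈ X.powerset, F S * activityWeight G X (Function.update a y (a y * b x))
        (Function.update b y (b y * (a x + b x))) S := by
  rw [sum_powerset_insert hx, ← sum_add_distrib]
  refine sum_congr rfl fun S hS => ?_
  rw [mem_powerset] at hS
  have hxS : x ∉ S := fun h => hx (hS h)
  have hins := isIndepSet_insert hxy huniq hS
  have hprod : ∏ z ∈ X, (if z ∈ insert x S then a z else b z) =
      ∏ z ∈ X, (if z ∈ S then a z else b z) := by
    refine prod_congr rfl fun z hz => ?_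
    have : z ≠ x := fun h => hx (h ▸ hz)
    simp [this]
  have hupd : ∏ z ∈ X.erase y, (if z ∈ S then Function.update a y (a y * b x) z
      else Function.update b y (b y * (a x + b x)) z) =
      ∏ z ∈ X.erase y, (if z ∈ S then a z else b z) := by
    refine prod_congr rfl fun z hz => ?_
    simp [ne_of_mem_erase hz]
  unfold activityWeight
  rw [prod_insert hx, prod_insert hx, hprod, hF, ← mul_prod_erase X _ hy,
    ← mul_prod_erase X (fun z => if z ∈ S then Function.update a y (a y * b x) z
      else Function.update b y (b y * (a x + b x)) z) hy, hupd]
  by_cases hI : IsIndepSet G S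
  · by_cases hyS : y ∈ S
    · simp only [hins, hI, hyS, hxS, if_true, if_false, not_true, and_false, mul_zero, add_zero,
        Function.update_self]
      ring
    · simp only [hins, hI, hyS, hxS, mem_insert_self, if_true, if_false, not_false_eq_true,
        and_true, Function.update_self]
      ring
  · simp [hins, hI]

/-- Vertices at distance at most `ℓ` from `r`. -/
def distBall (G : SimpleGraph V) (r : V) (ℓ : ℕ) : Finset V :=
  Finset.univ.filter fun v => G.dist r v ≤ ℓ

/-- The tree recursion: all levels below level `ℓ` can be summed out at the cost of changing the
activities on level `ℓ`. -/
lemma exists_activities_distBall {G : SimpleGraph V} (hG : G.IsTree) (r : V) (ℓ : ℕ) :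
    ∀ (n : ℕ) (X : Finset V), X.card = n → distBall G r ℓ ⊆ X →
      (∀ x ∈ X, ∀ y, G.dist r y < G.dist r x → y ∈ X) →
      ∀ a b : V → ℝ, (∀ x, 0 ≤ a x) → (∀ x, 0 ≤ b x) →
      ∃ a' b' : V → ℝ, (∀ x, 0 ≤ a' x) ∧ (∀ x, 0 ≤ b' x) ∧
        (∀ x, G.dist r x < ℓ → a' x = a x ∧ b' x = b x) ∧
        ∀ F : Finset V → ℝ, (∀ x S, ℓ < G.dist r x → F (insert x S) = F S) →
          ∑ S ∈ X.powerset, F S * activityWeight G X a b S =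
            ∑ S ∈ (distBall G r ℓ).powerset, F S * activityWeight G (distBall G r ℓ) a' b' S := by
  intro n
  induction n with
  | zero =>
    intro X hX hball _ a b ha hb
    have hXb : distBall G r ℓ = X := by
      rw [card_eq_zero] at hX
      subst hX
      exact subset_empty.1 hball
    exact ⟨a, b, ha, hb, fun _ _ => ⟨rfl, rfl⟩, fun F _ => by rw [hXb]⟩
  | succ n ih =>
    intro X hX hball hclosed a b ha hb
    by_cases hXb : X = distBall G r ℓ
    · exact ⟨a, b, ha, hb, fun _ _ => ⟨rfl, rfl⟩, fun F _ => by rw [hXb]⟩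
    obtain ⟨w, hwX, hwball⟩ : ∃ w ∈ X, w ∉ distBall G r ℓ := by
      by_contra! h
      exact hXb (subset_antisymm h hball)
    obtain ⟨x, hxX, hmax⟩ := exists_max_image X (fun z => G.dist r z) ⟨w, hwX⟩
    have hxl : ℓ < G.dist r x := by
      have := hmax w hwX
      simp only [distBall, mem_filter, mem_univ, true_and] at hwball
      omega
    obtain ⟨y, hxy, hdist⟩ := exists_parent hG (show 0 < G.dist r x by omega)
    have hyx : y ≠ x := hxy.ne'
    have hyX : y ∈ X.erase x := mem_erase.2 ⟨hyx, hclosed x hxX y (by omega)⟩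
    have huniq : ∀ z ∈ X.erase x, G.Adj x z → z = y := by
      intro z hz hxz
      have hzle := hmax z (mem_of_mem_erase hz)
      have hzd := hG.dist_eq_dist_add_one_of_adj r hxz
      exact parent_unique hG hxy hdist hxz (by omega)
    obtain ⟨a', b', ha', hb', hlow, hsum⟩ := ih (X.erase x)
      (by rw [card_erase_of_mem hxX, hX]; rfl)
      (fun z hz => mem_erase.2 ⟨by
        rintro rfl
        simp only [distBall, mem_filter, mem_univ, true_and] at hz
        omega, hball hz⟩)
      (fun z hz u hu => mem_erase.2 ⟨by
        rintro rfl
        have := hmax z (mem_of_mem_erase hz)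
        omega, hclosed z (mem_of_mem_erase hz) u hu⟩)
      (Function.update a y (a y * b x)) (Function.update b y (b y * (a x + b x)))
      (fun z => by
        rcases eq_or_ne z y with rfl | h
        · simpa using mul_nonneg (ha _) (hb _)
        · simpa [h] using ha z)
      (fun z => by
        rcases eq_or_ne z y with rfl | h
        · simpa using mul_nonneg (hb _) (add_nonneg (ha _) (hb _))
        · simpa [h] using hb z)
    refine ⟨a', b', ha', hb', fun z hz => ?_, fun F hF => ?_⟩
    · have hzy : z ≠ y := by
        rintro rfl
        omega
      simpa [hzy] using hlow z hz
    · rw [← hsum F hF, ← sum_activityWeight_insert (notMem_erase x X) hyX hxy huniq a b F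
        (fun S => hF x S hxl), insert_erase hxX]

/-- Normalising the activities on the level of `v` expresses the weight on the ball through the
pinned weights. -/
lemma activityWeight_distBall {G : SimpleGraph V} {r v : V} {lam : ℝ} {a b : V → ℝ}
    (ha : ∀ x, 0 ≤ a x) (hb : ∀ x, 0 ≤ b x)
    (hlow : ∀ x, G.dist r x < G.dist r v → a x = lam ∧ b x = 1)
    {S : Finset V} (hS : S ⊆ distBall G r (G.dist r v)) :
    activityWeight G (distBall G r (G.dist r v)) a b S =
      ((∏ u ∈ (levelSet G r (G.dist r v)).erase v, (a u + b u)) * a v) *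
          wIn G r lam v (fun u => a u / (a u + b u)) S +
        ((∏ u ∈ (levelSet G r (G.dist r v)).erase v, (a u + b u)) * b v) *
          wOut G r lam v (fun u => a u / (a u + b u)) S := by
  set P := (levelSet G r (G.dist r v)).erase v with hP
  set p : V → ℝ := fun u => a u / (a u + b u) with hp
  have hsub : ∀ u ∈ S, G.dist r u ≤ G.dist r v := fun u hu => by
    simpa [distBall] using hS hu
  have hball : distBall G r (G.dist r v) =
      (univ.filter fun x => G.dist r x < G.dist r v) ∪ insert v P := by
    ext x
    simp only [distBall, hP, levelSet, mem_filter, mem_univ, true_and, mem_union, mem_insert,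
      mem_erase]
    by_cases hx : x = v
    · simp [hx]
    · simp [hx, le_iff_lt_or_eq]
  have hdisj : Disjoint (univ.filter fun x => G.dist r x < G.dist r v) (insert v P) := by
    rw [disjoint_left]
    intro x hx hx'
    simp only [hP, levelSet, mem_filter, mem_univ, true_and, mem_insert, mem_erase] at hx hx'
    rcases hx' with rfl | ⟨-, h⟩ <;> omega
  have hvP : v ∉ P := by simp [hP]
  have hlowprod : ∏ x ∈ univ.filter (fun x => G.dist r x < G.dist r v),
      (if x ∈ S then a x else b x) = lam ^ (S.filter fun x => G.dist r x < G.dist r v).card := by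
    have : ∏ x ∈ univ.filter (fun x => G.dist r x < G.dist r v), (if x ∈ S then a x else b x) =
        ∏ x ∈ univ.filter (fun x => G.dist r x < G.dist r v), (if x ∈ S then lam else 1) := by
      refine prod_congr rfl fun x hx => ?_
      obtain ⟨h1, h2⟩ := hlow x (mem_filter.1 hx).2
      rw [h1, h2]
    rw [this, ← prod_filter, prod_const]
    congr 2
    ext x
    simp [and_comm]
  have hPprod : ∏ x ∈ P, (if x ∈ S then a x else b x) =
      (∏ u ∈ P, (a u + b u)) * ((∏ u ∈ P ∩ S, p u) * ∏ u ∈ P \ S, (1 - p u)) := by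
    have hpin : (∏ u ∈ P ∩ S, p u) * ∏ u ∈ P \ S, (1 - p u) =
        ∏ u ∈ P, (if u ∈ S then p u else 1 - p u) := by
      rw [prod_ite, filter_mem_eq_inter, filter_notMem_eq_sdiff]
    rw [hpin, ← prod_mul_distrib]
    refine prod_congr rfl fun u _ => ?_
    rcases eq_or_ne (a u + b u) 0 with h | h
    · have h1 : a u = 0 := by linarith [ha u, hb u]
      have h2 : b u = 0 := by linarith [ha u, hb u]
      simp [h1, h2]
    · simp only [hp]
      split_ifs
      · field_simp
      · field_simp
        ring
  unfold activityWeight wIn wOut pinWeight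
  rw [← hP, hball, prod_union hdisj, prod_insert hvP, hlowprod, hPprod]
  by_cases hI : IsIndepSet G S
  · have hcond : IsIndepSet G S ∧ ∀ u ∈ S, G.dist r u ≤ G.dist r v := ⟨hI, hsub⟩
    rw [if_pos hI]
    simp only [if_pos hcond]
    by_cases hv : v ∈ S
    · simp only [hv, if_true, not_true, if_false]
      ring
    · simp only [hv, if_true, not_false_eq_true, if_false]
      ring
  · simp [hI]

lemma pinWeight_nonneg {G : SimpleGraph V} {r : V} {lam : ℝ} (hlam : 0 < lam) {p : V → ℝ}
    (hp : ∀ u, 0 ≤ p u ∧ p u ≤ 1) (ℓ : ℕ) (P S : Finset V) :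
    0 ≤ pinWeight G r lam ℓ P p S := by
  unfold pinWeight
  split_ifs
  · exact mul_nonneg (mul_nonneg (by positivity) (prod_nonneg fun u _ => (hp u).1))
      (prod_nonneg fun u _ => by linarith [(hp u).2])
  · exact le_rfl

lemma wIn_nonneg {G : SimpleGraph V} {r v : V} {lam : ℝ} (hlam : 0 < lam) {p : V → ℝ}
    (hp : ∀ u, 0 ≤ p u ∧ p u ≤ 1) (S : Finset V) : 0 ≤ wIn G r lam v p S :=
  ite_nonneg (pinWeight_nonneg hlam hp _ _ _) le_rfl

lemma wOut_nonneg {G : SimpleGraph V} {r v : V} {lam : ℝ} (hlam : 0 < lam) {p : V → ℝ}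
    (hp : ∀ u, 0 ≤ p u ∧ p u ≤ 1) (S : Finset V) : 0 ≤ wOut G r lam v p S :=
  ite_nonneg (pinWeight_nonneg hlam hp _ _ _) le_rfl

lemma sum_ite_mem_nonneg {w : Finset V → ℝ} (hw : ∀ S, 0 ≤ w S) (x : V) :
    0 ≤ ∑ S : Finset V, if x ∈ S then w S else 0 :=
  sum_nonneg fun S _ => by split_ifs <;> simp [hw]

lemma sum_ite_mem_le {w : Finset V → ℝ} (hw : ∀ S, 0 ≤ w S) (x : V) :
    (∑ S : Finset V, if x ∈ S then w S else 0) ≤ ∑ S : Finset V, w S :=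
  sum_le_sum fun S _ => by split_ifs <;> simp [hw]

lemma prMem_mem_Icc {w : Finset V → ℝ} (hw : ∀ S, 0 ≤ w S) (x : V) :
    prMem w x ∈ Set.Icc (0 : ℝ) 1 :=
  ⟨div_nonneg (sum_ite_mem_nonneg hw x) (sum_nonneg fun S _ => hw S),
    div_le_one_of_le₀ (sum_ite_mem_le hw x) (sum_nonneg fun S _ => hw S)⟩

/-- Every single pinning is bounded by the pseudoinfluence. -/
lemma abs_prMem_sub_le_Ipseudo (G : SimpleGraph V) (r v : V) {lam : ℝ} (hlam : 0 < lam)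
    {p : V → ℝ} (hp : ∀ u, 0 ≤ p u ∧ p u ≤ 1) :
    |prMem (wIn G r lam v p) r - prMem (wOut G r lam v p) r| ≤ Ipseudo G r lam v := by
  refine le_csSup ⟨1, ?_⟩ ⟨p, hp, rfl⟩
  rintro _ ⟨q, hq, rfl⟩
  have h1 := prMem_mem_Icc (wIn_nonneg (G := G) (r := r) (v := v) hlam hq) r
  have h2 := prMem_mem_Icc (wOut_nonneg (G := G) (r := r) (v := v) hlam hq) r
  rw [abs_le]
  constructor <;> linarith [h1.1, h1.2, h2.1, h2.2]

/-- A quotient is as close to a weighted mediant as it is to the other quotient. -/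
lemma abs_div_sub_mediant_le {α β N₁ D₁ N₂ D₂ c : ℝ} (hβ : 0 ≤ β)
    (hN₂ : 0 ≤ N₂) (hND₂ : N₂ ≤ D₂) (hα : 0 ≤ α) (hD₁ : 0 < α * D₁)
    (h : |N₁ / D₁ - N₂ / D₂| ≤ c) :
    |α * N₁ / (α * D₁) - (α * N₁ + β * N₂) / (α * D₁ + β * D₂)| ≤ c := by
  have hα' : 0 < α := lt_of_le_of_ne hα (by rintro rfl; simp at hD₁)
  have hD₁' : 0 < D₁ := by
    by_contra! hneg
    exact absurd hD₁ (not_lt.2 (mul_nonpos_of_nonneg_of_nonpos hα hneg))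
  have hD₂ : 0 ≤ D₂ := hN₂.trans hND₂
  rcases hD₂.eq_or_lt with h0 | hD₂'
  · have hN0 : N₂ = 0 := le_antisymm (h0 ▸ hND₂) hN₂
    simp only [hN0, ← h0, mul_zero, add_zero, sub_self, abs_zero]
    exact (abs_nonneg _).trans h
  have hden : 0 < α * D₁ + β * D₂ := by positivity
  have heq : α * N₁ / (α * D₁) - (α * N₁ + β * N₂) / (α * D₁ + β * D₂) =
      (β * D₂ / (α * D₁ + β * D₂)) * (N₁ / D₁ - N₂ / D₂) := by
    field_simp
    ring
  have hle : β * D₂ / (α * D₁ + β * D₂) ≤ 1 := by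
    rw [div_le_one hden]
    linarith
  rw [heq, abs_mul, abs_of_nonneg (by positivity)]
  exact (mul_le_of_le_one_left (abs_nonneg _) hle).trans h

/-- Conditioning on the state of `v` changes the marginal of the root by at most the
pseudoinfluence of `v`, provided that all levels above `v` carry the plain hardcore activities. -/
lemma abs_prMem_cond_sub_le {G : SimpleGraph V} (hG : G.IsTree) {r v : V} {lam : ℝ}
    (hlam : 0 < lam) {a b : V → ℝ} (ha : ∀ x, 0 ≤ a x) (hb : ∀ x, 0 ≤ b x)
    (hlow : ∀ x, G.dist r x < G.dist r v → a x = lam ∧ b x = 1) :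
    (0 < ∑ S : Finset V, (if v ∈ S then activityWeight G univ a b S else 0) →
      |prMem (fun S => if v ∈ S then activityWeight G univ a b S else 0) r -
        prMem (activityWeight G univ a b) r| ≤ Ipseudo G r lam v) ∧
    (0 < ∑ S : Finset V, (if v ∉ S then activityWeight G univ a b S else 0) →
      |prMem (fun S => if v ∉ S then activityWeight G univ a b S else 0) r -
        prMem (activityWeight G univ a b) r| ≤ Ipseudo G r lam v) := by
  obtain ⟨a', b', ha', hb', hlow', hsum⟩ := exists_activities_distBall hG r (G.dist r v) _ univ
    rfl (subset_univ _) (fun _ _ _ _ => mem_univ _) a b ha hb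
  have hlow'' : ∀ x, G.dist r x < G.dist r v → a' x = lam ∧ b' x = 1 := fun x hx => by
    rw [(hlow' x hx).1, (hlow' x hx).2]
    exact hlow x hx
  set p : V → ℝ := fun u => a' u / (a' u + b' u) with hp
  have hp01 : ∀ u, 0 ≤ p u ∧ p u ≤ 1 := fun u =>
    ⟨div_nonneg (ha' u) (add_nonneg (ha' u) (hb' u)),
      div_le_one_of_le₀ (by linarith [hb' u]) (add_nonneg (ha' u) (hb' u))⟩
  set c := ∏ u ∈ (levelSet G r (G.dist r v)).erase v, (a' u + b' u) with hc
  have hc0 : 0 ≤ c := prod_nonneg fun u _ => add_nonneg (ha' u) (hb' u)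
  set α := c * a' v with hα
  set β := c * b' v with hβ
  have hα0 : 0 ≤ α := mul_nonneg hc0 (ha' v)
  have hβ0 : 0 ≤ β := mul_nonneg hc0 (hb' v)
  have key : ∀ F : Finset V → ℝ, (∀ x S, G.dist r v < G.dist r x → F (insert x S) = F S) →
      ∑ S : Finset V, F S * activityWeight G univ a b S =
        α * ∑ S : Finset V, F S * wIn G r lam v p S +
          β * ∑ S : Finset V, F S * wOut G r lam v p S := by
    intro F hF
    have h := hsum F hF
    rw [powerset_univ] at h
    rw [h, mul_sum, mul_sum, ← sum_add_distrib]
    have hzero : ∀ S ∈ (univ : Finset (Finset V)), S ∉ (distBall G r (G.dist r v)).powerset →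
        α * (F S * wIn G r lam v p S) + β * (F S * wOut G r lam v p S) = 0 := by
      intro S _ hS
      have hnot : ¬ (IsIndepSet G S ∧ ∀ u ∈ S, G.dist r u ≤ G.dist r v) := fun hh =>
        hS (mem_powerset.2 fun u hu => by simpa [distBall] using hh.2 u hu)
      simp [wIn, wOut, pinWeight, hnot]
    rw [← sum_subset (subset_univ _) hzero]
    refine sum_congr rfl fun S hS => ?_
    rw [activityWeight_distBall ha' hb' hlow'' (mem_powerset.1 hS)]
    ring
  have hr : ∀ x (S : Finset V), G.dist r v < G.dist r x → (r ∈ insert x S ↔ r ∈ S) := by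
    intro x S hx
    have : r ≠ x := by
      rintro rfl
      simp at hx
    simp [this]
  have hv : ∀ x (S : Finset V), G.dist r v < G.dist r x → (v ∈ insert x S ↔ v ∈ S) := by
    intro x S hx
    have : v ≠ x := by
      rintro rfl
      exact lt_irrefl _ hx
    simp [this]
  have hin : ∀ S, v ∉ S → wIn G r lam v p S = 0 := fun S h => by simp [wIn, h]
  have hout : ∀ S, v ∈ S → wOut G r lam v p S = 0 := fun S h => by simp [wOut, h]
  have hD := key (fun _ => 1) (fun _ _ _ => rfl)
  have hN := key (fun S => if r ∈ S then 1 else 0) (fun x S hx => by simp only [hr x S hx])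
  have hDin := key (fun S => if v ∈ S then 1 else 0) (fun x S hx => by simp only [hv x S hx])
  have hNin := key (fun S => if r ∈ S then (if v ∈ S then 1 else 0) else 0)
    (fun x S hx => by simp only [hr x S hx, hv x S hx])
  have hDout := key (fun S => if v ∉ S then 1 else 0) (fun x S hx => by simp only [hv x S hx])
  have hNout := key (fun S => if r ∈ S then (if v ∉ S then 1 else 0) else 0)
    (fun x S hx => by simp only [hr x S hx, hv x S hx])
  have e1 : ∀ S, (if v ∈ S then wIn G r lam v p S else 0) = wIn G r lam v p S := fun S => by
    split_ifs with h <;> simp [hin, h]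
  have e2 : ∀ S, (if v ∈ S then wOut G r lam v p S else 0) = 0 := fun S => by
    split_ifs with h <;> simp [hout, h]
  have e3 : ∀ S, (if v ∉ S then wIn G r lam v p S else 0) = 0 := fun S => by
    split_ifs with h <;> simp [hin, h]
  have e4 : ∀ S, (if v ∉ S then wOut G r lam v p S else 0) = wOut G r lam v p S := fun S => by
    split_ifs with h <;> simp [hout, h]
  simp only [ite_mul, one_mul, zero_mul, e1, e2, e3, e4, ite_self, sum_const_zero, mul_zero,
    add_zero, zero_add] at hD hN hDin hNin hDout hNout
  have hI := abs_prMem_sub_le_Ipseudo G r v hlam hp01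
  have hwi := wIn_nonneg (G := G) (r := r) (v := v) hlam hp01
  have hwo := wOut_nonneg (G := G) (r := r) (v := v) hlam hp01
  unfold prMem at hI ⊢
  constructor
  · intro hpos
    rw [hDin] at hpos
    rw [hD, hN, hDin, hNin]
    exact abs_div_sub_mediant_le hβ0 (sum_ite_mem_nonneg hwo r) (sum_ite_mem_le hwo r) hα0 hpos hI
  · intro hpos
    rw [hDout] at hpos
    rw [abs_sub_comm] at hI
    rw [hD, hN, hDout, hNout, add_comm (α * _), add_comm (α * _)]
    exact abs_div_sub_mediant_le hα0 (sum_ite_mem_nonneg hwi r) (sum_ite_mem_le hwi r) hβ0 hpos hI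

lemma hcWeight_superset_eq (G : SimpleGraph V) (lam : ℝ) (B S : Finset V) :
    (if B ⊆ S then hcWeight G lam S else 0) =
      activityWeight G univ (fun _ => lam) (fun x => if x ∈ B then 0 else 1) S := by
  unfold hcWeight activityWeight
  by_cases hI : IsIndepSet G S
  · simp only [hI, if_true]
    by_cases hB : B ⊆ S
    · have : ∀ x, (if x ∈ S then lam else if x ∈ B then 0 else 1) = if x ∈ S then lam else 1 := by
        intro x
        by_cases hx : x ∈ S
        · simp [hx]
        · simp [hx, mt (@hB x) hx]
      simp [hB, this]
    · obtain ⟨x, hxB, hxS⟩ := not_subset.1 hB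
      rw [if_neg hB, prod_eq_zero (mem_univ x)]
      simp [hxB, hxS]
  · simp [hI]

lemma hcWeight_disjoint_eq (G : SimpleGraph V) (lam : ℝ) (B S : Finset V) :
    (if Disjoint B S then hcWeight G lam S else 0) =
      activityWeight G univ (fun x => if x ∈ B then 0 else lam) (fun _ => 1) S := by
  unfold hcWeight activityWeight
  by_cases hI : IsIndepSet G S
  · simp only [hI, if_true]
    by_cases hB : Disjoint B S
    · have : ∀ x, (if x ∈ S then (if x ∈ B then 0 else lam) else 1) =
          if x ∈ S then lam else 1 := by
        intro x
        by_cases hx : x ∈ S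
        · simp [hx, disjoint_right.1 hB hx]
        · simp [hx]
      simp [hB, this]
    · obtain ⟨x, hxB, hxS⟩ := not_disjoint_iff.1 hB
      rw [if_neg hB, prod_eq_zero (mem_univ x)]
      simp [hxB, hxS]
  · simp [hI]

lemma hcWeight_nonneg (G : SimpleGraph V) {lam : ℝ} (hlam : 0 < lam) (S : Finset V) :
    0 ≤ hcWeight G lam S := by
  unfold hcWeight
  split_ifs
  · positivity
  · exact le_rfl

lemma sum_ite_hcWeight_pos (G : SimpleGraph V) {lam : ℝ} (hlam : 0 < lam)
    (Q : Finset V → Prop) [DecidablePred Q] {S₀ : Finset V} (hQ : Q S₀) (hS₀ : IsIndepSet G S₀) :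
    0 < ∑ S : Finset V, if Q S then hcWeight G lam S else 0 := by
  refine sum_pos' (fun S _ => ?_) ⟨S₀, mem_univ _, ?_⟩
  · split_ifs
    · exact hcWeight_nonneg G hlam S
    · exact le_rfl
  · simp only [hQ, hcWeight, hS₀, if_true]
    positivity

/-- Releasing an all-in conditioning, from the top level down. -/
lemma abs_prMem_superset_sub_le {G : SimpleGraph V} (hG : G.IsTree) {r : V} {lam : ℝ}
    (hlam : 0 < lam) (A : Finset V) (hA : IsIndepSet G A) :
    |prMem (fun S => if A ⊆ S then hcWeight G lam S else 0) r - prMem (hcWeight G lam) r| ≤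
      ∑ v ∈ A, Ipseudo G r lam v := by
  induction A using Finset.induction_on_min_value (fun v => G.dist r v) with
  | empty => simp
  | insert v B hvB hle ih =>
    have hB : IsIndepSet G B := fun i hi j hj =>
      hA i (mem_insert_of_mem hi) j (mem_insert_of_mem hj)
    have hw : (fun S => if insert v B ⊆ S then hcWeight G lam S else 0) =
        fun S => if v ∈ S then (if B ⊆ S then hcWeight G lam S else 0) else 0 := by
      ext S
      simp only [insert_subset_iff, ite_and]
    have hpos := sum_ite_hcWeight_pos G hlam (fun S => insert v B ⊆ S) (Subset.refl _) hA
    have hstep := (abs_prMem_cond_sub_le hG (r := r) (v := v) hlam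
      (a := fun _ => lam) (b := fun x => if x ∈ B then 0 else 1) (fun _ => hlam.le)
      (fun x => ite_nonneg le_rfl zero_le_one) (fun x hx => ⟨rfl, if_neg fun hxB =>
        (hle x hxB).not_gt hx⟩)).1
    rw [sum_congr rfl fun S _ => congrFun hw S] at hpos
    rw [← funext (hcWeight_superset_eq G lam B)] at hstep
    rw [hw, sum_insert hvB]
    exact (abs_sub_le _ _ _).trans (add_le_add (hstep hpos) (ih hB))

/-- Releasing an all-out conditioning, from the top level down. -/
lemma abs_prMem_disjoint_sub_le {G : SimpleGraph V} (hG : G.IsTree) {r : V} {lam : ℝ}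
    (hlam : 0 < lam) (A : Finset V) :
    |prMem (fun S => if Disjoint A S then hcWeight G lam S else 0) r - prMem (hcWeight G lam) r| ≤
      ∑ v ∈ A, Ipseudo G r lam v := by
  induction A using Finset.induction_on_min_value (fun v => G.dist r v) with
  | empty => simp
  | insert v B hvB hle ih =>
    have hw : (fun S => if Disjoint (insert v B) S then hcWeight G lam S else 0) =
        fun S => if v ∉ S then (if Disjoint B S then hcWeight G lam S else 0) else 0 := by
      ext S
      simp only [disjoint_insert_left, ite_and]
    have hpos := sum_ite_hcWeight_pos G hlam (fun S => Disjoint (insert v B) S)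
      (disjoint_empty_right _) (fun i hi => absurd hi (notMem_empty i))
    have hstep := (abs_prMem_cond_sub_le hG (r := r) (v := v) hlam
      (a := fun x => if x ∈ B then 0 else lam) (b := fun _ => 1)
      (fun x => ite_nonneg le_rfl hlam.le) (fun _ => zero_le_one)
      (fun x hx => ⟨if_neg fun hxB => (hle x hxB).not_gt hx, rfl⟩)).2
    rw [sum_congr rfl fun S _ => congrFun hw S] at hpos
    rw [← funext (hcWeight_disjoint_eq G lam B)] at hstep
    rw [hw, sum_insert hvB]
    exact (abs_sub_le _ _ _).trans (add_le_add (hstep hpos) ih)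

/-- **decoupling.** If no vertex of `A` lies on the path from the
root `r` to another vertex of `A` (and `r ∉ A`), then the influence of pinning
all of `A` in versus all of `A` out on the marginal of `r` is at most twice the
sum of the single-vertex pseudoinfluences `ℐ_r^v`, `v ∈ A`. -/
theorem statement13 (V : Type) [Fintype V] (G : SimpleGraph V) (hG : G.IsTree)
    (lam : ℝ) (hlam : 0 < lam) (r : V) (A : Finset V) (hrA : r ∉ A)
    (hpath : ∀ a ∈ A, ∀ b ∈ A, a ≠ b →
      ¬ (G.dist r b = G.dist r a + G.dist a b)) :
    |prMem (fun S => if A ⊆ S then hcWeight G lam S else 0) r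
        - prMem (fun S => if Disjoint A S then hcWeight G lam S else 0) r|
      ≤ 2 * ∑ v ∈ A, Ipseudo G r lam v := by
  have hA : IsIndepSet G A := by
    intro i hi j hj hij
    have hone := SimpleGraph.dist_eq_one_iff_adj.2 hij
    rcases hG.dist_eq_dist_add_one_of_adj r hij with h | h
    · exact hpath j hj i hi hij.ne' (by rw [h, G.dist_comm (u := j), hone])
    · exact hpath i hi j hj hij.ne (by rw [h, hone])
  have hin := abs_prMem_superset_sub_le hG (r := r) hlam A hA
  have hout := abs_prMem_disjoint_sub_le hG (r := r) hlam A
  rw [abs_sub_comm] at hout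
  exact (abs_sub_le _ _ _).trans ((add_le_add hin hout).trans_eq (two_mul _).symm)

end PaperStmt
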